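/- Let λ ∈ ℝ and let Λ : ℝ → ℝ be twice continuously differentiable. Define v(x,y) := (y² + x^{2/3})^{λ/2} · Λ(y·x^{−1/3}) for (x,y) ∈ (0,∞) × ℝ. Then v satisfies y·∂ₓv(x,y) − ∂²_{yy}v(x,y) = 0 at every point of (0,∞) × ℝ if and only if Λ satisfies, for every t ∈ ℝ, the ordinary differential equation Λ''(t) + (t²/3 + 2λt/(1+t²))·Λ'(t) + λ·( −(1/3)·t/(1+t²) + (1 + (λ−1)t²)/(1+t²)² )·Λ(t) = 0. -/

import Mathlib

open Filter Set

/-- The self-similar ansatz `v(x,y) = (y² + x^(2/3))^(l/2) · Λ(y · x^(-1/3))`,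
i.e. `v = r^l Λ(t)` in the polar-like variables `r, t`. -/
noncomputable def selfSimilar (l : ℝ) (Λ : ℝ → ℝ) (x y : ℝ) : ℝ :=
  (y ^ 2 + x ^ ((2 : ℝ) / 3)) ^ (l / 2) * Λ (y * x ^ (-(1 : ℝ) / 3))

lemma aux_form (l : ℝ) (Λ : ℝ → ℝ) (x y : ℝ) (hx : 0 < x) :
    selfSimilar l Λ x y = x ^ (l / 3) *
      ((fun t : ℝ => (1 + t ^ 2) ^ (l / 2) * Λ t) (y * x ^ (-(1 : ℝ) / 3))) := by
  unfold selfSimilar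
  have h1 : y ^ 2 + x ^ ((2 : ℝ) / 3)
      = x ^ ((2 : ℝ) / 3) * (1 + (y * x ^ (-(1 : ℝ) / 3)) ^ 2) := by
    have : x ^ ((2 : ℝ) / 3) * (x ^ (-(1 : ℝ) / 3)) ^ 2 = 1 := by
      rw [← Real.rpow_natCast, ← Real.rpow_mul hx.le, ← Real.rpow_add hx]
      norm_num
    linear_combination (-y ^ 2) * this
  rw [h1, Real.mul_rpow (by positivity) (by positivity), ← Real.rpow_mul hx.le]
  have : (2 : ℝ) / 3 * (l / 2) = l / 3 := by ring
  rw [this]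
  ring

lemma aux_weight (m t : ℝ) :
    HasDerivAt (fun t : ℝ => (1 + t ^ 2) ^ m) ((1 + t ^ 2) ^ m * (2 * m * t / (1 + t ^ 2))) t := by
  have hp : (0 : ℝ) < 1 + t ^ 2 := by positivity
  have hs : HasDerivAt (fun t : ℝ => 1 + t ^ 2) (2 * t) t := by
    simpa using (hasDerivAt_pow 2 t).const_add 1
  refine (hs.rpow_const (p := m) (Or.inl hp.ne')).congr_deriv ?_
  rw [Real.rpow_sub_one hp.ne']
  ring

lemma aux_pde (l : ℝ) (f f1 f2 : ℝ → ℝ) (v : ℝ → ℝ → ℝ)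
    (hv : ∀ x y, 0 < x → v x y = x ^ (l / 3) * f (y * x ^ (-(1 : ℝ) / 3)))
    (h1 : ∀ t, HasDerivAt f (f1 t) t) (h2 : ∀ t, HasDerivAt f1 (f2 t) t)
    (x y t : ℝ) (hx : 0 < x) (ht : t = y * x ^ (-(1 : ℝ) / 3)) :
    y * deriv (fun s : ℝ => v s y) x - deriv (deriv (fun t : ℝ => v x t)) y
      = - (x ^ (l / 3) * (x ^ (-(1 : ℝ) / 3)) ^ 2) * (f2 t + t ^ 2 / 3 * f1 t - l * t / 3 * f t) := by
  have hinv : x⁻¹ = (x ^ (-(1 : ℝ) / 3)) ^ 3 := by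
    rw [← Real.rpow_natCast, ← Real.rpow_mul hx.le, ← Real.rpow_neg_one]
    norm_num
  have hX : HasDerivAt (fun s : ℝ => v s y) ((l / 3) * x ^ (l / 3 - 1) * f t
      + x ^ (l / 3) * (f1 t * (y * ((-(1 : ℝ) / 3) * x ^ (-(1 : ℝ) / 3 - 1))))) x := by
    have ha := Real.hasDerivAt_rpow_const (x := x) (p := l / 3) (Or.inl hx.ne')
    have hb := (Real.hasDerivAt_rpow_const (x := x) (p := -(1 : ℝ) / 3) (Or.inl hx.ne')).const_mul y
    have hc : HasDerivAt (fun s : ℝ => f (y * s ^ (-(1 : ℝ) / 3))) _ x :=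
      HasDerivAt.comp x (h1 _) hb
    have hd := ha.mul hc
    rw [ht]
    refine hd.congr_of_eventuallyEq ?_
    filter_upwards [lt_mem_nhds hx] with s hs
    exact hv s y hs
  have hY : ∀ g g1 : ℝ → ℝ, (∀ t, HasDerivAt g (g1 t) t) → ∀ c b z : ℝ,
      HasDerivAt (fun u : ℝ => c * g (u * b)) (c * b * g1 (z * b)) z := by
    intro g g1 hg c b z
    have hb : HasDerivAt (fun u : ℝ => u * b) (1 * b) z := (hasDerivAt_id z).mul_const b
    have hc : HasDerivAt (fun u : ℝ => g (u * b)) _ z := HasDerivAt.comp z (hg _) hb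
    refine (hc.const_mul c).congr_deriv ?_
    ring
  have e0 : (fun u : ℝ => v x u) = fun u => x ^ (l / 3) * f (u * x ^ (-(1 : ℝ) / 3)) :=
    funext fun u => hv x u hx
  have e1 : deriv (fun u : ℝ => v x u)
      = fun u => x ^ (l / 3) * x ^ (-(1 : ℝ) / 3) * f1 (u * x ^ (-(1 : ℝ) / 3)) := by
    rw [e0]
    exact funext fun u => (hY f f1 h1 _ _ u).deriv
  rw [hX.deriv, e1, (hY f1 f2 h2 _ _ y).deriv, ← ht, Real.rpow_sub_one hx.ne',
    Real.rpow_sub_one hx.ne', div_eq_mul_inv _ x, div_eq_mul_inv _ x, hinv]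
  generalize x ^ (-(1 : ℝ) / 3) = b at *
  generalize x ^ (l / 3) = X at *
  generalize f t = F
  generalize f1 t = F1
  generalize f2 t = F2
  subst ht
  ring

/-- `v = r^λ Λ(t)` solves `y ∂ₓ v - ∂_yy v = 0` on `(0,∞) × ℝ` if and only if the
profile `Λ` solves the second-order ODE
`Λ'' + (t²/3 + 2λt/(1+t²)) Λ' + λ(-(1/3) t/(1+t²) + (1+(λ-1)t²)/(1+t²)²) Λ = 0`. -/
theorem stmt1 (l : ℝ) (Λ : ℝ → ℝ) (hΛ : ContDiff ℝ 2 Λ) :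
    (∀ x y : ℝ, 0 < x →
        y * deriv (fun s : ℝ => selfSimilar l Λ s y) x
          - deriv (deriv (fun t : ℝ => selfSimilar l Λ x t)) y = 0)
    ↔ (∀ t : ℝ,
        deriv (deriv Λ) t
          + (t ^ 2 / 3 + 2 * l * t / (1 + t ^ 2)) * deriv Λ t
          + l * (-(1 / 3) * t / (1 + t ^ 2) + (1 + (l - 1) * t ^ 2) / (1 + t ^ 2) ^ 2) * Λ t
          = 0) := by
  have hw : ∀ t : ℝ, (0 : ℝ) < 1 + t ^ 2 := fun t => by positivity
  have d1 : ∀ t, HasDerivAt Λ (deriv Λ t) t := fun t =>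
    (hΛ.differentiable (by norm_num) t).hasDerivAt
  have d2 : ∀ t, HasDerivAt (deriv Λ) (deriv (deriv Λ) t) t := by
    intro t
    have h : ContDiff ℝ (1 + 1) Λ := by
      convert hΛ using 1
      norm_num
    exact ((contDiff_succ_iff_deriv.1 h).2.2.differentiable (by norm_num) t).hasDerivAt
  have h1 : ∀ t, HasDerivAt (fun t : ℝ => (1 + t ^ 2) ^ (l / 2) * Λ t)
      ((1 + t ^ 2) ^ (l / 2) * (deriv Λ t + l * t / (1 + t ^ 2) * Λ t)) t := by
    intro t
    refine ((aux_weight (l / 2) t).mul (d1 t)).congr_deriv ?_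
    ring
  have h2 : ∀ t, HasDerivAt
      (fun t : ℝ => (1 + t ^ 2) ^ (l / 2) * (deriv Λ t + l * t / (1 + t ^ 2) * Λ t))
      ((1 + t ^ 2) ^ (l / 2) * (deriv (deriv Λ) t + 2 * l * t / (1 + t ^ 2) * deriv Λ t
        + l * (1 + (l - 1) * t ^ 2) / (1 + t ^ 2) ^ 2 * Λ t)) t := by
    intro t
    have hq : HasDerivAt (fun t : ℝ => l * t / (1 + t ^ 2))
        ((l * 1 * (1 + t ^ 2) - l * t * (2 * t)) / (1 + t ^ 2) ^ 2) t := by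
      have hn : HasDerivAt (fun t : ℝ => l * t) (l * 1) t := (hasDerivAt_id t).const_mul l
      have hs : HasDerivAt (fun t : ℝ => 1 + t ^ 2) (2 * t) t := by
        simpa using (hasDerivAt_pow 2 t).const_add 1
      exact hn.div hs (hw t).ne'
    refine ((aux_weight (l / 2) t).mul ((d2 t).add (hq.mul (d1 t)))).congr_deriv ?_
    have := (hw t).ne'
    simp only [Pi.add_apply, Pi.mul_apply]
    field_simp
    ring
  have key : ∀ x y t : ℝ, 0 < x → t = y * x ^ (-(1 : ℝ) / 3) →
      y * deriv (fun s : ℝ => selfSimilar l Λ s y) x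
          - deriv (deriv (fun t : ℝ => selfSimilar l Λ x t)) y
      = - (x ^ (l / 3) * (x ^ (-(1 : ℝ) / 3)) ^ 2 * (1 + t ^ 2) ^ (l / 2)) *
        (deriv (deriv Λ) t
          + (t ^ 2 / 3 + 2 * l * t / (1 + t ^ 2)) * deriv Λ t
          + l * (-(1 / 3) * t / (1 + t ^ 2) + (1 + (l - 1) * t ^ 2) / (1 + t ^ 2) ^ 2) * Λ t) := by
    intro x y t hx ht
    rw [aux_pde l _ _ _ (selfSimilar l Λ) (fun x y hx => aux_form l Λ x y hx) h1 h2 x y t hx ht]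
    have := (hw t).ne'
    generalize (1 + t ^ 2) ^ (l / 2) = W
    field_simp
    ring
  constructor
  · intro h t
    have hk := key 1 t t one_pos (by simp)
    rw [h 1 t one_pos] at hk
    have hne : (1 + t ^ 2) ^ (l / 2) ≠ 0 := (Real.rpow_pos_of_pos (hw t) _).ne'
    rcases mul_eq_zero.1 hk.symm with h0 | h0
    · simp [hne] at h0
    · exact h0
  · intro h x y hx
    rw [key x y _ hx rfl, h, mul_zero]
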